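/- Let (𝔭_j)_{j∈ℕ} be nonnegative reals with Σ_{j=0}^∞ 𝔭_j ≤ 1 and 𝔭₀ = 0, and let a_k := μ_k(0) be the occupation probabilities of 0 for the boundary random walk started at i₀ = 0. Then for every x ∈ (0,1), Σ_{k=0}^∞ a_k x^k ≤ 1/√(1 − x²). -/

import Mathlib

/-- The substochastic transition matrix of a boundary random walk on ℕ with
jumping measure `p` at the boundary state `0`. -/
noncomputable def Ptrans (p : ℕ → ℝ) : ℕ → ℕ → ℝ
  | 0, j => p j
  | i + 1, j => if j = i ∨ j = i + 2 then 1 / 2 else 0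

/-- The (substochastic) distribution at time `k` of the boundary random walk
with jumping measure `p` started at `i₀`. -/
noncomputable def occ (p : ℕ → ℝ) (i₀ : ℕ) : ℕ → ℕ → ℝ
  | 0 => fun j => if j = i₀ then 1 else 0
  | k + 1 => fun j => ∑' i : ℕ, occ p i₀ k i * Ptrans p i j

lemma hasSum_congr_aux {f g : ℕ → ℝ} {a : ℝ} (h : ∀ j, f j = g j) : HasSum f a ↔ HasSum g a := by
  rw [funext h]

lemma occ_succ_zero (p : ℕ → ℝ) (k : ℕ) :
    occ p 0 (k + 1) 0 = occ p 0 k 0 * p 0 + 1 / 2 * occ p 0 k 1 := by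
  change ∑' i : ℕ, occ p 0 k i * Ptrans p i 0 = _
  rw [tsum_eq_sum (s := {0, 1})]
  · rw [Finset.sum_pair (by norm_num)]
    simp [Ptrans]; ring
  · intro b hb
    rcases b with _ | _ | b
    · simp at hb
    · simp at hb
    · simp [Ptrans]

lemma occ_succ_one (p : ℕ → ℝ) (k : ℕ) :
    occ p 0 (k + 1) 1 = occ p 0 k 0 * p 1 + 1 / 2 * occ p 0 k 2 := by
  change ∑' i : ℕ, occ p 0 k i * Ptrans p i 1 = _
  rw [tsum_eq_sum (s := {0, 2})]
  · rw [Finset.sum_pair (by norm_num)]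
    simp [Ptrans]; ring
  · intro b hb
    rcases b with _ | _ | _ | b
    · simp at hb
    · simp [Ptrans]
    · simp at hb
    · simp [Ptrans]

lemma occ_succ_two (p : ℕ → ℝ) (k j : ℕ) :
    occ p 0 (k + 1) (j + 2) = occ p 0 k 0 * p (j + 2) + 1 / 2 * occ p 0 k (j + 3)
      + 1 / 2 * occ p 0 k (j + 1) := by
  change ∑' i : ℕ, occ p 0 k i * Ptrans p i (j + 2) = _
  rw [tsum_eq_sum (s := {0, j + 3, j + 1})]
  · rw [Finset.sum_insert (by simp), Finset.sum_pair (by omega)]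
    simp [Ptrans]; ring
  · intro b hb
    rcases b with _ | b
    · simp at hb
    · simp at hb
      have : ¬ (j + 2 = b ∨ j + 2 = b + 2) := by omega
      simp only [Ptrans, if_neg this, mul_zero]

lemma occ_nonneg' (p : ℕ → ℝ) (hp0 : ∀ j, 0 ≤ p j) (k j : ℕ) : 0 ≤ occ p 0 k j := by
  induction k generalizing j with
  | zero => simp only [occ]; split_ifs <;> norm_num
  | succ k ih =>
    change 0 ≤ ∑' i : ℕ, occ p 0 k i * Ptrans p i j
    refine tsum_nonneg fun i => mul_nonneg (ih i) ?_
    cases i with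
    | zero => exact hp0 j
    | succ i => simp only [Ptrans]; split_ifs <;> norm_num

lemma occ_step (p : ℕ → ℝ) (x l F M : ℝ) (k : ℕ) (hl : 0 < l)
    (hxl : x / 2 * (1 + l ^ 2) = l)
    (hF : HasSum (fun j => p j * l ^ j) F) (hM : HasSum (fun j => occ p 0 k j * l ^ j) M) :
    ∃ M', HasSum (fun j => occ p 0 (k + 1) j * l ^ j) M' ∧
      x * M' = occ p 0 k 0 * (x * F) + (M - occ p 0 k 0) := by
  have h1 : HasSum (fun j => occ p 0 k (j + 1) * l ^ (j + 1)) (M - occ p 0 k 0) := by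
    have := (hasSum_nat_add_iff' (f := fun j => occ p 0 k j * l ^ j) 1).2 hM
    simpa using this
  have h2 : HasSum (fun j => 1 / 2 * occ p 0 k (j + 1) * l ^ j)
      ((M - occ p 0 k 0) * (1 / (2 * l))) := by
    refine (hasSum_congr_aux ?_).2 (h1.mul_right (1 / (2 * l)))
    intro j
    field_simp
    ring
  let g : ℕ → ℝ := fun j => match j with
    | 0 => 0
    | 1 => 0
    | j + 2 => 1 / 2 * occ p 0 k (j + 1) * l ^ (j + 2)
  have h3 : HasSum g ((M - occ p 0 k 0) * (l / 2)) := by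
    rw [← hasSum_nat_add_iff' 2]
    have : HasSum (fun j => g (j + 2)) ((M - occ p 0 k 0) * (l / 2)) := by
      refine (hasSum_congr_aux ?_).2 (h1.mul_right (l / 2))
      intro j
      simp only [g]
      ring
    simpa [Finset.sum_range_succ, g] using this
  refine ⟨_, (hasSum_congr_aux ?_).2 (((hF.mul_left (occ p 0 k 0)).add h2).add h3), ?_⟩
  · intro j
    rcases j with _ | _ | j
    · simp only [zero_add, occ_succ_zero, g]; ring
    · simp only [zero_add, occ_succ_one, g]; ring
    · simp only [occ_succ_two, g]; ring
  · have : x * (1 / (2 * l) + l / 2) = 1 := by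
      field_simp
      linarith
    linear_combination (M - occ p 0 k 0) * this


/-- If `𝔭₀ = 0`, then the generating function of the occupation probabilities of `0`
for the boundary random walk started at `0` satisfies `∑ₖ aₖ xᵏ ≤ 1/√(1 - x²)` for
`x ∈ (0,1)`. -/
theorem stmt15 (p : ℕ → ℝ) (hp0 : ∀ j, 0 ≤ p j) (hpsum : Summable p)
    (hp1 : ∑' j : ℕ, p j ≤ 1) (hp00 : p 0 = 0)
    (x : ℝ) (hx : x ∈ Set.Ioo (0 : ℝ) 1) :
    Summable (fun k : ℕ => occ p 0 k 0 * x ^ k) ∧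
      ∑' k : ℕ, occ p 0 k 0 * x ^ k ≤ 1 / Real.sqrt (1 - x ^ 2) := by
  obtain ⟨hx0, hx1⟩ := hx
  have hpos : 0 < 1 - x ^ 2 := by nlinarith
  set s := Real.sqrt (1 - x ^ 2) with hs
  have hs0 : 0 < s := Real.sqrt_pos.2 hpos
  have hss : s ^ 2 = 1 - x ^ 2 := Real.sq_sqrt hpos.le
  have hs1 : s < 1 := by nlinarith
  obtain ⟨l, hl⟩ : ∃ l, l = (1 - s) / x := ⟨_, rfl⟩
  have hxl : x * l = 1 - s := by rw [hl]; field_simp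
  have hl0 : 0 < l := by rw [hl]; exact div_pos (by linarith) hx0
  have hl1 : l ≤ 1 := by
    rw [hl, div_le_one hx0]
    nlinarith
  have hq : x / 2 * (1 + l ^ 2) = l := by
    have : x * (x / 2 * (1 + l ^ 2)) = x * l := by
      have : (x * l) ^ 2 = (1 - s) ^ 2 := by rw [hxl]
      nlinarith
    exact mul_left_cancel₀ hx0.ne' this
  have hle : ∀ j, p j * l ^ j ≤ p j * l := by
    intro j
    rcases j with _ | j
    · simp [hp00]
    · exact mul_le_mul_of_nonneg_left (pow_le_of_le_one hl0.le hl1 (by omega)) (hp0 _)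
  have hFs : Summable (fun j => p j * l ^ j) :=
    Summable.of_nonneg_of_le (fun j => mul_nonneg (hp0 j) (pow_nonneg hl0.le j)) hle
      (hpsum.mul_right l)
  have hF : x * ∑' j, p j * l ^ j ≤ 1 - s := by
    have h1 : ∑' j, p j * l ^ j ≤ ∑' j, p j * l := hFs.tsum_le_tsum hle (hpsum.mul_right l)
    rw [tsum_mul_right] at h1
    have h2 : ∑' j, p j * l ^ j ≤ l := h1.trans (by nlinarith)
    rw [← hxl]
    exact mul_le_mul_of_nonneg_left h2 hx0.le
  have key : ∀ n, ∃ M, HasSum (fun j => occ p 0 n j * l ^ j) M ∧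
      s * ∑ k ∈ Finset.range n, occ p 0 k 0 * x ^ k ≤ 1 - x ^ n * M := by
    intro n
    induction n with
    | zero =>
      refine ⟨1, ?_, by simp⟩
      have := hasSum_ite_eq (0 : ℕ) (1 : ℝ)
      refine (hasSum_congr_aux ?_).2 this
      intro j
      rcases j with _ | j <;> simp [occ]
    | succ n ih =>
      obtain ⟨M, hM, hb⟩ := ih
      obtain ⟨M', hM', he⟩ := occ_step p x l _ M n hl0 hq hFs.hasSum hM
      refine ⟨M', hM', ?_⟩
      have ha := occ_nonneg' p hp0 n 0
      have h1 : x * M' ≤ M - s * occ p 0 n 0 := by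
        have := mul_le_mul_of_nonneg_left hF ha
        linarith
      have h2 := mul_le_mul_of_nonneg_left h1 (pow_nonneg hx0.le n)
      rw [Finset.sum_range_succ, pow_succ]
      linarith
  have hnn : ∀ k, 0 ≤ occ p 0 k 0 * x ^ k := fun k =>
    mul_nonneg (occ_nonneg' p hp0 k 0) (pow_nonneg hx0.le k)
  have hbd : ∀ n, ∑ k ∈ Finset.range n, occ p 0 k 0 * x ^ k ≤ 1 / s := by
    intro n
    obtain ⟨M, hM, hb⟩ := key n
    have hM0 : 0 ≤ M := hM.nonneg fun j =>
      mul_nonneg (occ_nonneg' p hp0 n j) (pow_nonneg hl0.le j)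
    have := mul_nonneg (pow_nonneg hx0.le n) hM0
    rw [le_div_iff₀ hs0]
    linarith
  exact ⟨summable_of_sum_range_le hnn hbd, Real.tsum_le_of_sum_range_le hnn hbd⟩
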